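/- The DMV update with the determinant-optimal weight does not increase the determinant of the error covariance: the infimum over ω ∈ (0,1) of det P⁺(ω) is at most det P. -/

import Mathlib

open Matrix

/-!
Adding a positive semidefinite matrix to a positive definite information matrix does not decrease
its determinant, so `det P⁺(ω) ≤ det (ω P⁻¹)⁻¹ = ω⁻ⁿ det P` for every `ω ∈ (0,1)`. The infimum lies
below all these bounds, hence below their limit `det P` as `ω → 1⁻`.
-/

open Filter
open scoped Topology

section Determinant

open scoped ComplexOrder MatrixOrder

variable {𝕜 n : Type*} [RCLike 𝕜] [Fintype n] [DecidableEq n] {A B : Matrix n n 𝕜}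

theorem det_one_add_eq_prod_one_add_eigenvalues (hA : A.IsHermitian) :
    (1 + A).det = ∏ i, (1 + (hA.eigenvalues i : 𝕜)) := by
  have hdiag : (1 + A : Matrix n n 𝕜) = Unitary.conjStarAlgAut 𝕜 _ hA.eigenvectorUnitary
      (1 + diagonal (RCLike.ofReal ∘ hA.eigenvalues)) := by
    rw [map_add, map_one, ← hA.spectral_theorem]
  rw [hdiag, Unitary.conjStarAlgAut_apply, det_mul_right_comm,
    Unitary.mul_star_self_of_mem (SetLike.coe_mem _), one_mul, ← diagonal_one, diagonal_add,
    det_diagonal]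
  rfl

theorem one_le_det_one_add_of_posSemidef (hA : A.PosSemidef) : 1 ≤ (1 + A).det := by
  rw [det_one_add_eq_prod_one_add_eigenvalues hA.isHermitian]
  refine Finset.one_le_prod fun i ↦ ?_
  simpa using hA.eigenvalues_nonneg i

theorem det_le_det_add_of_posSemidef (hA : A.PosSemidef) (hB : B.PosSemidef) :
    A.det ≤ (A + B).det := by
  by_cases hdet : A.det = 0
  · exact hdet ▸ (hA.add hB).det_nonneg
  · obtain ⟨C, rfl⟩ : ∃ C, B = Cᴴ * C := CStarAlgebra.nonneg_iff_eq_star_mul_self.mp hB.nonneg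
    rw [det_add_mul _ _ (isUnit_iff_ne_zero.mpr hdet)]
    exact le_mul_of_one_le_right hA.det_nonneg
      (one_le_det_one_add_of_posSemidef (hA.inv.mul_mul_conjTranspose_same C))

theorem det_inv_add_le_det_inv (hA : A.PosDef) (hB : B.PosSemidef) :
    (A + B)⁻¹.det ≤ A⁻¹.det := by
  simp only [det_nonsing_inv, Ring.inverse_eq_inv']
  exact inv_anti₀ hA.det_pos (det_le_det_add_of_posSemidef hA.posSemidef hB)

theorem det_inv_smul_inv_add_le {c : 𝕜} (hc : 0 < c) (hA : A.PosDef) (hB : B.PosSemidef) :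
    (c • A⁻¹ + B)⁻¹.det ≤ c⁻¹ ^ Fintype.card n * A.det :=
  calc
    (c • A⁻¹ + B)⁻¹.det ≤ (c • A⁻¹)⁻¹.det := det_inv_add_le_det_inv (hA.inv.smul hc) hB
    _ = c⁻¹ ^ Fintype.card n * A.det := by simp [det_nonsing_inv, mul_comm]

end Determinant

theorem posSemidef_conjTranspose_mul_inv_add_mul {α l m n : Type*} [CommRing α] [PartialOrder α]
    [StarRing α] [AddLeftMono α] [Fintype l] [Fintype m] [DecidableEq m] [Finite n]
    {Q : Matrix l l α} {R : Matrix m m α} (hQ : Q.PosSemidef) (hR : R.PosSemidef)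
    (G : Matrix m l α) (H : Matrix m n α) :
    (Hᴴ * (G * Q * Gᴴ + R)⁻¹ * H).PosSemidef :=
  ((hQ.mul_mul_conjTranspose_same G).add hR).inv.conjTranspose_mul_mul_same H

theorem dmv_inf_det_updated_covariance_le_general {n : Type*} [Fintype n] [DecidableEq n]
    {P : Matrix n n ℝ} (hP : P.PosDef) {Λ : ℝ → Matrix n n ℝ}
    (hΛ : ∀ ω ∈ Set.Ioo (0 : ℝ) 1, (Λ ω).PosSemidef) :
    sInf ((fun ω : ℝ ↦ ((ω • P⁻¹ + (1 - ω) • Λ ω)⁻¹).det) '' Set.Ioo (0 : ℝ) 1) ≤ P.det := by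
  have hinfo : ∀ ω ∈ Set.Ioo (0 : ℝ) 1, ((1 - ω) • Λ ω).PosSemidef := fun ω hω ↦
    (hΛ ω hω).smul (sub_nonneg.mpr hω.2.le)
  have hbdd : BddBelow ((fun ω : ℝ ↦ ((ω • P⁻¹ + (1 - ω) • Λ ω)⁻¹).det) '' Set.Ioo (0 : ℝ) 1) := by
    refine ⟨0, Set.forall_mem_image.mpr fun ω hω ↦ ?_⟩
    exact ((hP.inv.smul hω.1).posSemidef.add (hinfo ω hω)).inv.det_nonneg
  have hlim : Tendsto (fun ω : ℝ ↦ ω⁻¹ ^ Fintype.card n * P.det) (𝓝[<] 1) (𝓝 P.det) := by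
    have hcont : ContinuousAt (fun ω : ℝ ↦ ω⁻¹ ^ Fintype.card n * P.det) 1 := by
      fun_prop (disch := exact one_ne_zero)
    simpa using hcont.tendsto.mono_left nhdsWithin_le_nhds
  refine ge_of_tendsto hlim ?_
  filter_upwards [Ioo_mem_nhdsLT zero_lt_one] with ω hω
  exact csInf_le_of_le hbdd (Set.mem_image_of_mem _ hω)
    (det_inv_smul_inv_add_le hω.1 hP (hinfo ω hω))

/-- The DMV update with the determinant-optimal weight does not increase the
determinant of the error covariance: the infimum over `ω ∈ (0,1)` of `det P⁺(ω)` is at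
most `det P`. -/
theorem dmv_inf_det_updated_covariance_le
    (n p m : ℕ) (hn : 0 < n) (hp : 0 < p) (hm : 0 < m)
    (P : Matrix (Fin n) (Fin n) ℝ) (hP : P.PosDef)
    (Pj : Matrix (Fin p) (Fin p) ℝ) (hPj : Pj.PosSemidef)
    (R : Matrix (Fin m) (Fin m) ℝ) (hR : R.PosDef)
    (Hi : Matrix (Fin m) (Fin n) ℝ) (Hj : Matrix (Fin m) (Fin p) ℝ) :
    sInf ((fun ω : ℝ =>
        ((ω • P⁻¹ + (1 - ω) •
            (Hiᵀ * (Hj * Pj * Hjᵀ + (1 - ω) • R)⁻¹ * Hi))⁻¹).det)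
      '' Set.Ioo (0 : ℝ) 1) ≤ P.det :=
  dmv_inf_det_updated_covariance_le_general hP fun _ hω ↦
    posSemidef_conjTranspose_mul_inv_add_mul hPj
      (hR.posSemidef.smul (sub_nonneg.mpr hω.2.le)) Hj Hi
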